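/- Let X be a bi-Hilbertian A–B-bimodule with finite right numerical index λ, i.e., ‖Σᵢ {}_A⟨fᵢ, fᵢ⟩‖ ≤ λ‖Σᵢ Θ_{fᵢ,fᵢ}‖ for all finite families (fᵢ) in X. Then the map Υ on finite-rank operators defined by Υ(Θ_{e,f}) = {}_A⟨e, f⟩ extends to an A-bilinear positive map Υ : K(X_B) → A, and for any T ∈ K(X_B) commuting with the left action of A, Υ(T) lies in the center of M(A) (in particular Υ(Id) when defined is central). -/

import Mathlib

noncomputable section

open Filter Topology

universe u

/-- A bundled right Hilbert C*-module structure over a (possibly non-unital)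
C*-algebra `B` on a complete normed complex vector space `X`.  The fields record
the right `B`-action, the `B`-valued inner product, and their standard axioms,
including positivity of inner products and compatibility of the norm. -/
structure HilbertModule (B : Type u) (X : Type u)
    [NonUnitalCStarAlgebra B] [NormedAddCommGroup X] [NormedSpace ℂ X] [CompleteSpace X] :
    Type u where
  smulR : X → B → X
  inner : X → X → B
  smulR_add : ∀ (x : X) (b c : B), smulR x (b + c) = smulR x b + smulR x c
  add_smulR : ∀ (x y : X) (b : B), smulR (x + y) b = smulR x b + smulR y b
  smulR_mul : ∀ (x : X) (b c : B), smulR x (b * c) = smulR (smulR x b) c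
  smulC_smulR : ∀ (c : ℂ) (x : X) (b : B), smulR (c • x) b = c • smulR x b
  inner_add_left : ∀ x y z : X, inner (x + y) z = inner x z + inner y z
  inner_add_right : ∀ x y z : X, inner x (y + z) = inner x y + inner x z
  inner_smulR_right : ∀ (x y : X) (b : B), inner x (smulR y b) = inner x y * b
  inner_smulC_right : ∀ (c : ℂ) (x y : X), inner x (c • y) = c • inner x y
  star_inner : ∀ x y : X, star (inner x y) = inner y x
  inner_self_pos : ∀ x : X, ∃ b : B, inner x x = star b * b
  norm_inner_self : ∀ x : X, ‖x‖ ^ 2 = ‖inner x x‖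

/-- `T : X → Y` and `S : Y → X` are mutually adjoint operators between
right Hilbert `B`-modules. -/
def HilbertModule.IsAdjointPair {B X Y : Type u} [NonUnitalCStarAlgebra B]
    [NormedAddCommGroup X] [NormedSpace ℂ X] [CompleteSpace X]
    [NormedAddCommGroup Y] [NormedSpace ℂ Y] [CompleteSpace Y]
    (hX : HilbertModule B X) (hY : HilbertModule B Y)
    (T : X → Y) (S : Y → X) : Prop :=
  ∀ (x : X) (y : Y), hY.inner (T x) y = hX.inner x (S y)

/-- Positivity in a C*-algebra, expressed as being of the form `star c * c`. -/
def IsPositiveElem {B : Type u} [NonUnitalCStarAlgebra B] (b : B) : Prop :=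
  ∃ c : B, b = star c * c

/-- Positivity of a matrix over a C*-algebra. -/
def MatrixIsPositive {A : Type u} [NonUnitalCStarAlgebra A] {n : ℕ}
    (M : Matrix (Fin n) (Fin n) A) : Prop :=
  ∃ N : Matrix (Fin n) (Fin n) A, M = N.conjTranspose * N

/-- A sequential (the algebras in question are separable) approximate unit. -/
structure IsApproxUnit {A : Type u} [NonUnitalCStarAlgebra A] (e : ℕ → A) : Prop where
  pos : ∀ n, IsPositiveElem (e n)
  norm_le_one : ∀ n, ‖e n‖ ≤ 1
  tendsto_mul_left : ∀ a : A, Tendsto (fun n => e n * a) atTop (𝓝 a)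
  tendsto_mul_right : ∀ a : A, Tendsto (fun n => a * e n) atTop (𝓝 a)

/-- A completely positive map between C*-algebras: a linear map sending positive
matrices to positive matrices at every matrix level. -/
structure IsCPMap {A B : Type u} [NonUnitalCStarAlgebra A] [NonUnitalCStarAlgebra B]
    (ρ : A → B) : Prop where
  map_add : ∀ a a', ρ (a + a') = ρ a + ρ a'
  map_smul : ∀ (c : ℂ) (a : A), ρ (c • a) = c • ρ a
  map_pos_matrix : ∀ (n : ℕ) (M : Matrix (Fin n) (Fin n) A),
    MatrixIsPositive M → MatrixIsPositive (M.map ρ)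

/-- A map between C*-algebras is strict if some approximate unit of the domain is
sent to a strictly Cauchy net in the multiplier algebra of the codomain. -/
def IsStrictMap {A B : Type u} [NonUnitalCStarAlgebra A] [NonUnitalCStarAlgebra B]
    (ρ : A → B) : Prop :=
  ∃ e : ℕ → A, IsApproxUnit e ∧
    ∀ b : B, CauchySeq (fun n => ρ (e n) * b) ∧ CauchySeq (fun n => b * ρ (e n))

/-- A completely positive map from `A` into the adjointable operators on a
right Hilbert `B`-module `X`. -/
structure IsCPAction {A B X : Type u} [NonUnitalCStarAlgebra A] [NonUnitalCStarAlgebra B]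
    [NormedAddCommGroup X] [NormedSpace ℂ X] [CompleteSpace X]
    (hX : HilbertModule B X) (ρ : A → X → X) : Prop where
  map_add : ∀ a a' x, ρ (a + a') x = ρ a x + ρ a' x
  map_smul : ∀ (c : ℂ) (a : A) x, ρ (c • a) x = c • ρ a x
  add_right : ∀ a x y, ρ a (x + y) = ρ a x + ρ a y
  adjointable : ∀ a, ∃ S, HilbertModule.IsAdjointPair hX hX (ρ a) S
  pos : ∀ (n : ℕ) (M : Matrix (Fin n) (Fin n) A), MatrixIsPositive M →
    ∀ x : Fin n → X, IsPositiveElem (∑ i, ∑ j, hX.inner (x i) (ρ (M i j) (x j)))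

/-- Strictness for a completely positive map into the adjointable operators on a
Hilbert module: some approximate unit is mapped to a strictly Cauchy net. -/
def IsStrictAction {A B X : Type u} [NonUnitalCStarAlgebra A] [NonUnitalCStarAlgebra B]
    [NormedAddCommGroup X] [NormedSpace ℂ X] [CompleteSpace X]
    (hX : HilbertModule B X) (ρ : A → X → X) : Prop :=
  ∃ e : ℕ → A, IsApproxUnit e ∧ ∃ S : ℕ → X → X,
    (∀ n, HilbertModule.IsAdjointPair hX hX (ρ (e n)) (S n)) ∧
    ∀ x, CauchySeq (fun n => ρ (e n) x) ∧ CauchySeq (fun n => S n x)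

/-- A left action of `A` on a Hilbert `B`-module by adjointable operators via a
*-homomorphism, i.e. the structure of an `A`–`B`-correspondence. -/
structure IsCorrespondenceAction {A B X : Type u} [NonUnitalCStarAlgebra A]
    [NonUnitalCStarAlgebra B]
    [NormedAddCommGroup X] [NormedSpace ℂ X] [CompleteSpace X]
    (hX : HilbertModule B X) (φ : A → X → X) : Prop where
  map_add : ∀ a a' x, φ (a + a') x = φ a x + φ a' x
  map_mul : ∀ a a' x, φ (a * a') x = φ a (φ a' x)
  map_smul : ∀ (c : ℂ) (a : A) x, φ (c • a) x = c • φ a x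
  add_right : ∀ a x y, φ a (x + y) = φ a x + φ a y
  star_adjoint : ∀ a, HilbertModule.IsAdjointPair hX hX (φ a) (φ (star a))

/-- The trivial right Hilbert `B`-module structure on `B` itself. -/
def trivHM (B : Type u) [NonUnitalCStarAlgebra B] : HilbertModule B B where
  smulR b c := b * c
  inner b c := star b * c
  smulR_add := by intros; simp [mul_add]
  add_smulR := by intros; simp [add_mul]
  smulR_mul := by intros; simp [mul_assoc]
  smulC_smulR := by intros; simp [smul_mul_assoc]
  inner_add_left := by intros; simp [star_add, add_mul]
  inner_add_right := by intros; simp [mul_add]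
  inner_smulR_right := by intros; simp [mul_assoc]
  inner_smulC_right := by intros; simp [mul_smul_comm]
  star_inner := by intros; simp [star_mul, mul_assoc]
  inner_self_pos := fun b => ⟨b, rfl⟩
  norm_inner_self := by intro b; rw [CStarRing.norm_star_mul_self, pow_two]

/-- `T` is "compact relative to the projection/identification `Q`": it can be
approximated in operator norm by finite sums of rank-one operators
`θ_{u,v} : z ↦ u⟨v, z⟩` with vectors in the image of `Q`.  With `Q = id` this
says `T ∈ K(X)`. -/
def IsCptOn {B X : Type u} [NonUnitalCStarAlgebra B]
    [NormedAddCommGroup X] [NormedSpace ℂ X] [CompleteSpace X]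
    (hX : HilbertModule B X) (Q : X → X) (T : X → X) : Prop :=
  ∀ ε : ℝ, 0 < ε → ∃ (n : ℕ) (u v : Fin n → X), ∀ z : X,
    ‖T (Q z) - ∑ i, hX.smulR (Q (u i)) (hX.inner (Q (v i)) (Q z))‖ ≤ ε * ‖Q z‖

/-- A bi-Hilbertian `A`–`B`-bimodule: a right Hilbert `B`-module `F` with an
additional left `A`-action `actL` and left `A`-valued inner product `innerL`
making it a left Hilbert `A`-module, such that each action is adjointable for
the other inner product and the two norms are equivalent. -/
structure BiHilbertModule (A B F : Type u)
    [NonUnitalCStarAlgebra A] [NonUnitalCStarAlgebra B]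
    [NormedAddCommGroup F] [NormedSpace ℂ F] [CompleteSpace F] : Type u where
  right : HilbertModule B F
  actL : A → F → F
  actL_corr : IsCorrespondenceAction right actL
  innerL : F → F → A
  innerL_add_left : ∀ x y z, innerL (x + y) z = innerL x z + innerL y z
  innerL_add_right : ∀ x y z, innerL x (y + z) = innerL x y + innerL x z
  innerL_actL_left : ∀ (a : A) x y, innerL (actL a x) y = a * innerL x y
  star_innerL : ∀ x y, star (innerL x y) = innerL y x
  innerL_pos : ∀ x, IsPositiveElem (innerL x x)
  -- the right `B`-action is adjointable for the left inner product
  innerL_smulR : ∀ x y (b : B), innerL (right.smulR x b) y = innerL x (right.smulR y (star b))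
  -- the two inner products induce equivalent norms
  norm_equiv : ∃ c : ℝ, 0 < c ∧ ∀ x,
    ‖innerL x x‖ ≤ c * ‖right.inner x x‖ ∧ ‖right.inner x x‖ ≤ c * ‖innerL x x‖

section CStarLemmas

attribute [local instance] CStarAlgebra.spectralOrder CStarAlgebra.spectralOrderedRing

theorem isPositiveElem_iff_nonneg {A : Type u} [NonUnitalCStarAlgebra A] {a : A} :
    IsPositiveElem a ↔ 0 ≤ a :=
  CStarAlgebra.nonneg_iff_eq_star_mul_self.symm

theorem isClosed_isPositiveElem {A : Type u} [NonUnitalCStarAlgebra A] :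
    IsClosed {a : A | IsPositiveElem a} := by
  simp only [isPositiveElem_iff_nonneg]
  exact CStarAlgebra.isClosed_nonneg

theorem IsPositiveElem.sum {A : Type u} [NonUnitalCStarAlgebra A] {ι : Type*} (s : Finset ι)
    {f : ι → A} (h : ∀ i ∈ s, IsPositiveElem (f i)) : IsPositiveElem (∑ i ∈ s, f i) := by
  simp only [isPositiveElem_iff_nonneg] at h ⊢
  exact Finset.sum_nonneg h

theorem norm_le_norm_sum_of_isPositiveElem {A : Type u} [NonUnitalCStarAlgebra A] {ι : Type*}
    {s : Finset ι} {f : ι → A} (h : ∀ i ∈ s, IsPositiveElem (f i)) {i : ι} (hi : i ∈ s) :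
    ‖f i‖ ≤ ‖∑ j ∈ s, f j‖ := by
  simp only [isPositiveElem_iff_nonneg] at h
  exact CStarAlgebra.norm_le_norm_of_nonneg_of_le (h i hi)
    (Finset.single_le_sum (f := f) (fun j hj => h j hj) hi)

/-- The Cauchy–Schwarz inequality for an algebra-valued form, deduced from positivity of the form
on the vectors `x - a y`: here `P`, `Q`, `R` play the roles of `⟨x, x⟩`, `⟨y, y⟩`, `⟨x, y⟩`. -/
theorem norm_sq_le_of_forall_isPositiveElem {A : Type u} [NonUnitalCStarAlgebra A] {P Q R : A}
    (hQ : IsPositiveElem Q)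
    (h : ∀ a : A, IsPositiveElem (P - a * star R - R * star a + a * Q * star a)) :
    ‖R‖ ^ 2 ≤ ‖P‖ * ‖Q‖ := by
  simp only [isPositiveElem_iff_nonneg] at hQ h
  have hQs : IsSelfAdjoint Q := .of_nonneg hQ
  have key : ∀ t : ℝ, ‖Q‖ < t → ‖R‖ ^ 2 ≤ ‖P‖ * t := by
    intro t ht
    have htpos : 0 < t := (norm_nonneg _).trans_lt ht
    have h1 := h ((t⁻¹ : ℝ) • R)
    have h2 : R * Q * star R ≤ t • (R * star R) :=
      (CStarAlgebra.star_right_conjugate_le_norm_smul (a := R) (b := Q)).trans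
        (smul_le_smul_of_nonneg_right ht.le (mul_star_self_nonneg R))
    have h3 : (t⁻¹ * t⁻¹ : ℝ) • (R * Q * star R) ≤ t⁻¹ • (R * star R) := by
      refine (smul_le_smul_of_nonneg_left h2 (by positivity)).trans_eq ?_
      rw [smul_smul]; congr 1; field_simp
    have h4 : t⁻¹ • (R * star R) ≤ P := by
      have e : P - (t⁻¹ • R) * star R - R * star (t⁻¹ • R) + (t⁻¹ • R) * Q * star (t⁻¹ • R)
          = (P - t⁻¹ • (R * star R)) -
            (t⁻¹ • (R * star R) - (t⁻¹ * t⁻¹ : ℝ) • (R * Q * star R)) := by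
        simp only [star_smul, star_trivial, smul_mul_assoc, mul_smul_comm, smul_smul]
        abel
      rw [e] at h1
      have := add_nonneg h1 (sub_nonneg.2 h3)
      rw [sub_add_cancel] at this
      exact sub_nonneg.1 this
    have h5 := CStarAlgebra.norm_le_norm_of_nonneg_of_le
      (smul_nonneg (by positivity) (mul_star_self_nonneg R)) h4
    rw [norm_smul, CStarRing.norm_self_mul_star, Real.norm_of_nonneg (by positivity)] at h5
    rw [inv_mul_le_iff₀ htpos] at h5
    nlinarith
  refine le_of_forall_pos_le_add fun ε hε => ?_
  have := key (‖Q‖ + ε / (‖P‖ + 1)) (by have : 0 < ε / (‖P‖ + 1) := by positivity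
                                        linarith)
  have h6 : ‖P‖ * (ε / (‖P‖ + 1)) ≤ ε := by
    rw [mul_div_assoc', div_le_iff₀ (by positivity)]
    nlinarith [norm_nonneg P]
  linarith [mul_add ‖P‖ ‖Q‖ (ε / (‖P‖ + 1))]

theorem exists_conjugate_eq_neg_star_mul_self {E : Type*} [CStarAlgebra E] {T : E}
    (hT : IsSelfAdjoint T) : ∃ m s : E, IsSelfAdjoint m ∧ m * T * m = -(star s * s) ∧
      (s = 0 → 0 ≤ T) := by
  have hm0 : 0 ≤ T⁻ := CFC.negPart_nonneg T
  have hms : IsSelfAdjoint T⁻ := .of_nonneg hm0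
  have hm3 : 0 ≤ T⁻ * T⁻ * T⁻ := hms.conjugate_nonneg hm0
  obtain ⟨s, hs⟩ := CStarAlgebra.nonneg_iff_eq_star_mul_self.1 hm3
  refine ⟨T⁻, s, hms, ?_, fun h0 => ?_⟩
  · rw [← hs]
    conv_lhs => enter [1, 2]; rw [← CFC.posPart_sub_negPart T hT]
    rw [mul_sub, sub_mul, mul_assoc, CFC.posPart_mul_negPart, mul_zero, zero_sub]
  · rw [← CFC.negPart_eq_zero_iff T hT, ← CStarRing.star_mul_self_eq_zero_iff, hms.star_eq,
      ← CStarRing.star_mul_self_eq_zero_iff, star_mul, hms.star_eq, ← mul_assoc, hs, h0]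
    simp

/-- An element `p` close to `M ^ (-1/2)`, such that the contraction `p M p` is almost the identity
on the range of `M`. -/
theorem exists_conjugate_norm_le_one {E : Type*} [CStarAlgebra E] {M : E} (hM : 0 ≤ M)
    {δ : ℝ} (hδ : 0 < δ) : ∃ p r : E, IsSelfAdjoint p ∧ IsSelfAdjoint r ∧ 1 - p * M * p = r ∧
      ‖p * M * p‖ ≤ 1 ∧ ‖r * M * r‖ ≤ δ := by
  have hpos (x : ℝ) : 0 < δ + |x| := by positivity
  let p : ℝ → ℝ := fun x => (√(δ + |x|))⁻¹
  let q : ℝ → ℝ := fun x => x * (δ + |x|)⁻¹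
  let r : ℝ → ℝ := fun x => 1 - q x
  have hp : Continuous p :=
    Continuous.inv₀ (by fun_prop) fun x => (Real.sqrt_pos.2 (hpos x)).ne'
  have hq : Continuous q :=
    continuous_id.mul (Continuous.inv₀ (by fun_prop) fun x => (hpos x).ne')
  have hr : Continuous r := continuous_const.sub hq
  have hconj {f : ℝ → ℝ} (hf : Continuous f) :
      cfc f M * M * cfc f M = cfc (fun x => f x * x * f x) M := by
    nth_rw 2 [← cfc_id' ℝ M]
    rw [← cfc_mul f (fun x => x) M hf.continuousOn,
      ← cfc_mul (fun x => f x * x) f M (by fun_prop) hf.continuousOn]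
  have hK : cfc p M * M * cfc p M = cfc q M := by
    rw [hconj hp]
    congr 1
    ext x
    have := Real.mul_self_sqrt (hpos x).le
    simp only [p, q]
    rw [← this, mul_inv]
    simp [(hpos x).le]
    ring
  refine ⟨cfc p M, cfc r M, cfc_predicate _ _, cfc_predicate _ _, ?_, ?_, ?_⟩
  · rw [hK, ← cfc_const_one ℝ M, ← cfc_sub (fun _ => (1 : ℝ)) q M (by fun_prop) hq.continuousOn]
  · rw [hK]
    refine norm_cfc_le zero_le_one fun x _ => ?_
    rw [Real.norm_eq_abs, abs_mul, abs_inv, abs_of_pos (hpos x), ← div_eq_mul_inv,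
      div_le_one (hpos x)]
    linarith
  · rw [hconj hr]
    refine norm_cfc_le hδ.le fun x hx => ?_
    have hx0 : 0 ≤ x := spectrum_nonneg_of_nonneg hM hx
    have e1 : r x = δ / (δ + x) := by
      simp only [r, q, abs_of_nonneg hx0]
      field_simp
      ring
    rw [Real.norm_of_nonneg (by rw [e1]; positivity), e1, div_mul_eq_mul_div, div_mul_div_comm,
      div_le_iff₀ (by positivity)]
    nlinarith [mul_nonneg hδ.le (sq_nonneg x), mul_pos hδ hδ,
      mul_nonneg (mul_pos hδ hδ).le hx0, pow_pos hδ 3]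

end CStarLemmas

namespace HilbertModule

variable {B X : Type u} [NonUnitalCStarAlgebra B] [NormedAddCommGroup X] [NormedSpace ℂ X]
  [CompleteSpace X] (h : HilbertModule B X)

@[simp] theorem inner_zero_right (x : X) : h.inner x 0 = 0 := by
  simpa using h.inner_add_right x 0 0

@[simp] theorem inner_zero_left (x : X) : h.inner 0 x = 0 := by
  simpa using h.inner_add_left 0 0 x

theorem inner_neg_right (x y : X) : h.inner x (-y) = -h.inner x y := by
  rw [eq_neg_iff_add_eq_zero, ← inner_add_right]; simp

theorem inner_neg_left (x y : X) : h.inner (-x) y = -h.inner x y := by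
  rw [eq_neg_iff_add_eq_zero, ← inner_add_left]; simp

theorem inner_sub_right (x y z : X) : h.inner x (y - z) = h.inner x y - h.inner x z := by
  simp [sub_eq_add_neg, inner_add_right, inner_neg_right]

theorem inner_sub_left (x y z : X) : h.inner (x - y) z = h.inner x z - h.inner y z := by
  simp [sub_eq_add_neg, inner_add_left, inner_neg_left]

theorem inner_sum_right {ι : Type*} (s : Finset ι) (x : X) (f : ι → X) :
    h.inner x (∑ i ∈ s, f i) = ∑ i ∈ s, h.inner x (f i) :=
  map_sum (AddMonoidHom.mk' (h.inner x) (h.inner_add_right x)) f s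

theorem inner_sum_left {ι : Type*} (s : Finset ι) (x : X) (f : ι → X) :
    h.inner (∑ i ∈ s, f i) x = ∑ i ∈ s, h.inner (f i) x :=
  map_sum (AddMonoidHom.mk' (fun y => h.inner y x) (fun y z => h.inner_add_left y z x)) f s

theorem inner_smulC_left (c : ℂ) (x y : X) : h.inner (c • x) y = star c • h.inner x y := by
  rw [← h.star_inner, inner_smulC_right, star_smul, star_inner]

theorem inner_smulR_left (x y : X) (b : B) :
    h.inner (h.smulR x b) y = star b * h.inner x y := by
  rw [← h.star_inner, inner_smulR_right, star_mul, star_inner]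

theorem inner_self_eq_zero {x : X} (hx : h.inner x x = 0) : x = 0 := by
  have := h.norm_inner_self x
  simpa [hx] using this

theorem ext_inner {x y : X} (hxy : ∀ z, h.inner x z = h.inner y z) : x = y := by
  rw [← sub_eq_zero]
  apply h.inner_self_eq_zero
  rw [inner_sub_left, hxy, sub_self]

theorem ext_inner_right {x y : X} (hxy : ∀ z, h.inner z x = h.inner z y) : x = y :=
  h.ext_inner fun z => by rw [← h.star_inner, hxy, h.star_inner]

theorem isPositiveElem_inner_self (x : X) : IsPositiveElem (h.inner x x) := h.inner_self_pos x

theorem norm_inner_le (x y : X) : ‖h.inner x y‖ ≤ ‖x‖ * ‖y‖ := by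
  have := norm_sq_le_of_forall_isPositiveElem (P := h.inner x x) (Q := h.inner y y)
    (R := h.inner x y) (h.inner_self_pos y) fun a => by
      convert h.isPositiveElem_inner_self (x - h.smulR y (star a)) using 1
      simp only [inner_sub_left, inner_sub_right, inner_smulR_left, inner_smulR_right, star_star,
        star_inner]
      noncomm_ring
  rw [← h.norm_inner_self, ← h.norm_inner_self] at this
  exact abs_le_of_sq_le_sq' (by rwa [mul_pow]) (by positivity) |>.2

theorem continuous_inner_left (z : X) : Continuous fun w => h.inner w z := by
  refine (AddMonoidHomClass.continuous_of_bound
    (AddMonoidHom.mk' (fun w => h.inner w z) fun a b => h.inner_add_left a b z) ‖z‖ fun w => ?_)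
  simpa [mul_comm] using h.norm_inner_le w z

theorem continuous_inner_right (z : X) : Continuous fun w => h.inner z w :=
  (continuous_star.comp (h.continuous_inner_left z)).congr fun w => h.star_inner w z

theorem norm_smulR_le (x : X) (b : B) : ‖h.smulR x b‖ ≤ ‖x‖ * ‖b‖ := by
  refine abs_le_of_sq_le_sq' ?_ (by positivity) |>.2
  rw [h.norm_inner_self, inner_smulR_left, inner_smulR_right, mul_pow, h.norm_inner_self x]
  calc ‖star b * (h.inner x x * b)‖ ≤ ‖star b‖ * (‖h.inner x x‖ * ‖b‖) :=
        (norm_mul_le _ _).trans (by gcongr; exact norm_mul_le _ _)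
    _ = _ := by rw [norm_star]; ring

variable {h}

namespace IsAdjointPair

variable {T S T' S' : X → X}

theorem symm (hT : IsAdjointPair h h T S) : IsAdjointPair h h S T := fun x y => by
  rw [← h.star_inner, ← hT, h.star_inner]

theorem map_add (hT : IsAdjointPair h h T S) (x y : X) : T (x + y) = T x + T y :=
  h.ext_inner fun z => by rw [h.inner_add_left, hT, hT, hT, h.inner_add_left]

theorem map_sub (hT : IsAdjointPair h h T S) (x y : X) : T (x - y) = T x - T y :=
  h.ext_inner fun z => by rw [h.inner_sub_left, hT, hT, hT, h.inner_sub_left]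

theorem map_sum (hT : IsAdjointPair h h T S) {ι : Type*} (s : Finset ι) (f : ι → X) :
    T (∑ i ∈ s, f i) = ∑ i ∈ s, T (f i) :=
  _root_.map_sum (AddMonoidHom.mk' T hT.map_add) f s

theorem map_smulR (hT : IsAdjointPair h h T S) (x : X) (b : B) :
    T (h.smulR x b) = h.smulR (T x) b :=
  h.ext_inner fun z => by rw [h.inner_smulR_left, hT, hT, h.inner_smulR_left]

theorem map_smul (hT : IsAdjointPair h h T S) (c : ℂ) (x : X) : T (c • x) = c • T x :=
  h.ext_inner fun z => by rw [h.inner_smulC_left, hT, hT, h.inner_smulC_left]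

theorem comp (hT : IsAdjointPair h h T S) (hT' : IsAdjointPair h h T' S') :
    IsAdjointPair h h (fun x => T (T' x)) (fun x => S' (S x)) := fun x y => by
  rw [hT, hT']

theorem isClosed_eq (hT : IsAdjointPair h h T S) {u : ℕ → X} {x y : X}
    (hu : Tendsto u atTop (𝓝 x)) (hTu : Tendsto (fun n => T (u n)) atTop (𝓝 y)) : y = T x := by
  have hc := h.continuous_inner_left
  refine h.ext_inner fun z => ?_
  rw [hT]
  refine tendsto_nhds_unique (((hc z).tendsto y).comp hTu) ?_
  have := ((hc (S z)).tendsto x).comp hu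
  exact this.congr fun n => (hT (u n) z).symm

/-- An adjointable map is automatically linear and bounded. -/
def toCLM (hT : IsAdjointPair h h T S) : X →L[ℂ] X :=
  ContinuousLinearMap.ofSeqClosedGraph
    (g := { toFun := T, map_add' := hT.map_add, map_smul' := hT.map_smul })
    fun _ _ _ hu hTu => hT.isClosed_eq hu hTu

@[simp] theorem toCLM_apply (hT : IsAdjointPair h h T S) (x : X) : hT.toCLM x = T x := rfl

theorem norm_adjoint_le (hT : IsAdjointPair h h T S) {C : ℝ} (hC : 0 ≤ C)
    (hb : ∀ x, ‖T x‖ ≤ C * ‖x‖) (x : X) : ‖S x‖ ≤ C * ‖x‖ := by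
  have h1 : ‖S x‖ ^ 2 ≤ (C * ‖S x‖) * ‖x‖ := by
    rw [h.norm_inner_self, ← hT]
    exact (h.norm_inner_le _ _).trans (by gcongr; exact hb _)
  rcases eq_or_ne ‖S x‖ 0 with h0 | h0
  · rw [h0]; positivity
  · have : 0 < ‖S x‖ := lt_of_le_of_ne (norm_nonneg _) h0.symm
    nlinarith

end IsAdjointPair

variable (h)

theorem isAdjointPair_rankOne (e f : X) :
    IsAdjointPair h h (fun z => h.smulR e (h.inner f z)) (fun z => h.smulR f (h.inner e z)) :=
  fun x y => by
    rw [inner_smulR_left, inner_smulR_right, star_inner]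

theorem isAdjointPair_sum {ι : Type*} (s : Finset ι) {T S : ι → X → X}
    (hT : ∀ i, IsAdjointPair h h (T i) (S i)) :
    IsAdjointPair h h (fun z => ∑ i ∈ s, T i z) (fun z => ∑ i ∈ s, S i z) := fun x y => by
  rw [inner_sum_left, inner_sum_right]
  exact Finset.sum_congr rfl fun i _ => hT i x y

/-- The algebra of adjointable operators on a Hilbert module. -/
def adjointable : Subalgebra ℂ (X →L[ℂ] X) where
  carrier := {T | ∃ S, IsAdjointPair h h T S}
  mul_mem' := fun ⟨_, hT⟩ ⟨_, hS⟩ => ⟨_, hT.comp hS⟩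
  add_mem' := fun {T T'} ⟨S, hT⟩ ⟨S', hT'⟩ => ⟨fun y => S y + S' y, fun x y => by
    rw [inner_add_right, ← hT, ← hT', ← inner_add_left]; rfl⟩
  algebraMap_mem' c := ⟨fun y => star c • y, fun x y => by
    rw [inner_smulC_right, ← inner_smulC_left]; rfl⟩

variable {h} in
/-- An adjoint pair of maps, as an element of the algebra of adjointable operators. -/
def IsAdjointPair.toAdjointable {T S : X → X} (hT : IsAdjointPair h h T S) : h.adjointable :=
  ⟨hT.toCLM, S, hT⟩

namespace adjointable

variable {h}

theorem exists_adjoint (T : h.adjointable) : ∃ S : h.adjointable, IsAdjointPair h h T.1 S.1 := by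
  obtain ⟨T, S, hT⟩ := T
  exact ⟨hT.symm.toAdjointable, hT⟩

instance : Star h.adjointable := ⟨fun T => (exists_adjoint T).choose⟩

theorem isAdjointPair_star (T : h.adjointable) : IsAdjointPair h h T.1 (star T).1 :=
  (exists_adjoint T).choose_spec

theorem eq_star_of_isAdjointPair {T S : h.adjointable} (hTS : IsAdjointPair h h T.1 S.1) :
    star T = S :=
  Subtype.ext <| ContinuousLinearMap.ext fun y => h.ext_inner_right fun x => by
    rw [← isAdjointPair_star, hTS]

instance : StarRing h.adjointable where
  star_involutive T := eq_star_of_isAdjointPair (isAdjointPair_star T).symm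
  star_mul T S := eq_star_of_isAdjointPair <|
    (isAdjointPair_star T).comp (isAdjointPair_star S)
  star_add T S := eq_star_of_isAdjointPair fun x y => by
    change h.inner (T.1 x + S.1 x) y = h.inner x ((star T).1 y + (star S).1 y)
    rw [inner_add_left, inner_add_right, ← isAdjointPair_star, ← isAdjointPair_star]

instance : StarModule ℂ h.adjointable where
  star_smul c T := eq_star_of_isAdjointPair fun x y => by
    change h.inner (c • T.1 x) y = h.inner x (star c • (star T).1 y)
    rw [inner_smulC_left, inner_smulC_right, ← isAdjointPair_star]

theorem norm_star_le (T : h.adjointable) : ‖star T‖ ≤ ‖T‖ :=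
  ContinuousLinearMap.opNorm_le_bound _ (norm_nonneg _) <|
    (isAdjointPair_star T).norm_adjoint_le (norm_nonneg _) T.1.le_opNorm

instance : CStarRing h.adjointable where
  norm_mul_self_le T := by
    have hb (x : X) : ‖T.1 x‖ ≤ √‖star T * T‖ * ‖x‖ := by
      refine abs_le_of_sq_le_sq' ?_ (by positivity) |>.2
      rw [h.norm_inner_self, mul_pow, Real.sq_sqrt (show 0 ≤ ‖star T * T‖ from norm_nonneg _),
        isAdjointPair_star T]
      refine (h.norm_inner_le _ _).trans ?_
      have := (star T * T).1.le_opNorm x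
      calc ‖x‖ * ‖(star T * T).1 x‖ ≤ ‖x‖ * (‖star T * T‖ * ‖x‖) := by gcongr; exact this
        _ = _ := by ring
    have h1 : ‖T‖ ≤ √‖star T * T‖ := ContinuousLinearMap.opNorm_le_bound _ (Real.sqrt_nonneg _) hb
    calc ‖T‖ * ‖T‖ ≤ √‖star T * T‖ * √‖star T * T‖ := by gcongr
      _ = _ := Real.mul_self_sqrt (norm_nonneg _)

variable (h) in
theorem isClosed : IsClosed (h.adjointable : Set (X →L[ℂ] X)) := by
  refine isClosed_of_closure_subset fun T hT => ?_
  obtain ⟨u, hu, hlim⟩ := mem_closure_iff_seq_limit.1 hT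
  let U : ℕ → h.adjointable := fun n => ⟨u n, hu n⟩
  have hc : CauchySeq fun n => (star (U n)).1 := by
    refine Metric.cauchySeq_iff.2 fun ε hε => ?_
    obtain ⟨N, hN⟩ := Metric.cauchySeq_iff.1 hlim.cauchySeq ε hε
    refine ⟨N, fun m hm n hn => lt_of_le_of_lt ?_ (hN m hm n hn)⟩
    rw [dist_eq_norm, dist_eq_norm]
    have := norm_star_le (U m - U n)
    rwa [star_sub] at this
  obtain ⟨S, hS⟩ := cauchySeq_tendsto_of_complete hc
  have happ {v : ℕ → X →L[ℂ] X} {V} (hv : Tendsto v atTop (𝓝 V)) (x : X) :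
      Tendsto (fun n => v n x) atTop (𝓝 (V x)) :=
    ((ContinuousLinearMap.apply ℂ X x).continuous.tendsto V).comp hv
  refine ⟨S, fun x y => ?_⟩
  refine tendsto_nhds_unique ((h.continuous_inner_left y).tendsto _ |>.comp (happ hlim x)) ?_
  refine ((h.continuous_inner_right x).tendsto _ |>.comp (happ hS y)).congr fun n => ?_
  exact (isAdjointPair_star (U n) x y).symm

instance : CompleteSpace h.adjointable := (isClosed h).completeSpace_coe

instance : CStarAlgebra h.adjointable where

end adjointable

end HilbertModule

namespace HilbertModule

variable {B X : Type u} [NonUnitalCStarAlgebra B] [NormedAddCommGroup X] [NormedSpace ℂ X]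
  [CompleteSpace X] (h : HilbertModule B X)

attribute [local instance] CStarAlgebra.spectralOrder CStarAlgebra.spectralOrderedRing

variable {h} in
theorem adjointable.nonneg_of_forall_inner {T : h.adjointable} (hT : IsSelfAdjoint T)
    (hpos : ∀ z, IsPositiveElem (h.inner z (T.1 z))) : 0 ≤ T := by
  obtain ⟨m, s, hm, hms, hs⟩ := exists_conjugate_eq_neg_star_mul_self hT
  refine hs <| Subtype.ext <| ContinuousLinearMap.ext fun z => h.inner_self_eq_zero ?_
  have h1 := hpos (m.1 z)
  have hm' := isAdjointPair_star m
  rw [hm.star_eq] at hm'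
  have h2 : m.1 (T.1 (m.1 z)) = -(star s).1 (s.1 z) := by
    change (m * T * m).1 z = _
    rw [hms]
    rfl
  rw [hm', h2, inner_neg_right, ← isAdjointPair_star s] at h1
  have h3 := h.isPositiveElem_inner_self (s.1 z)
  rw [isPositiveElem_iff_nonneg] at h1 h3
  exact le_antisymm (neg_nonneg.1 h1) h3

theorem norm_sq_le_of_rankOne_sum_le {n : ℕ} (w : Fin n → X) {C : ℝ} (hC : 0 ≤ C)
    (hw : ∀ z, ‖∑ j, h.smulR (w j) (h.inner (w j) z)‖ ≤ C * ‖z‖) (i : Fin n) :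
    ‖w i‖ ^ 2 ≤ C := by
  have h1 : ‖h.inner (w i) (w i) * h.inner (w i) (w i)‖ ≤
      ‖∑ j, h.inner (w i) (w j) * h.inner (w j) (w i)‖ :=
    norm_le_norm_sum_of_isPositiveElem (f := fun j => h.inner (w i) (w j) * h.inner (w j) (w i))
      (fun j _ => ⟨h.inner (w j) (w i), by rw [h.star_inner]⟩) (Finset.mem_univ i)
  have h2 : ∑ j, h.inner (w i) (w j) * h.inner (w j) (w i) =
      h.inner (w i) (∑ j, h.smulR (w j) (h.inner (w j) (w i))) := by
    simp only [inner_sum_right, inner_smulR_right]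
  have h3 : ‖h.inner (w i) (w i) * h.inner (w i) (w i)‖ = ‖w i‖ ^ 4 := by
    nth_rw 1 [← h.star_inner (w i) (w i)]
    rw [CStarRing.norm_star_mul_self, ← h.norm_inner_self]; ring
  rw [h3, h2] at h1
  have h4 : ‖w i‖ ^ 4 ≤ ‖w i‖ * (C * ‖w i‖) :=
    (h1.trans (h.norm_inner_le _ _)).trans (by gcongr; exact hw _)
  rcases eq_or_ne (w i) 0 with h0 | h0
  · simpa [h0] using hC
  · have : 0 < ‖w i‖ ^ 2 := by positivity
    refine le_of_mul_le_mul_right ?_ this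
    linarith

/-- The positive finite-rank operator `∑ Θ_{eᵢ,eᵢ}`. -/
def rankOneSum {n : ℕ} (e : Fin n → X) : h.adjointable :=
  (h.isAdjointPair_sum Finset.univ fun i => h.isAdjointPair_rankOne (e i) (e i)).toAdjointable

theorem rankOneSum_apply {n : ℕ} (e : Fin n → X) (z : X) :
    (h.rankOneSum e).1 z = ∑ i, h.smulR (e i) (h.inner (e i) z) := rfl

theorem isSelfAdjoint_rankOneSum {n : ℕ} (e : Fin n → X) : IsSelfAdjoint (h.rankOneSum e) :=
  adjointable.eq_star_of_isAdjointPair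
    (h.isAdjointPair_sum Finset.univ fun i => h.isAdjointPair_rankOne (e i) (e i))

theorem rankOneSum_nonneg {n : ℕ} (e : Fin n → X) : 0 ≤ h.rankOneSum e := by
  refine adjointable.nonneg_of_forall_inner (h.isSelfAdjoint_rankOneSum e) fun z => ?_
  simp only [rankOneSum_apply, inner_sum_right, inner_smulR_right]
  exact IsPositiveElem.sum _ fun i _ => ⟨h.inner (e i) z, by rw [h.star_inner]⟩

theorem conj_rankOneSum {n : ℕ} (e : Fin n → X) {P : h.adjointable} (hP : IsSelfAdjoint P) :
    P * h.rankOneSum e * P = h.rankOneSum fun i => P.1 (e i) := by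
  have hP' := adjointable.isAdjointPair_star P
  rw [hP.star_eq] at hP'
  refine Subtype.ext <| ContinuousLinearMap.ext fun z => ?_
  change P.1 ((h.rankOneSum e).1 (P.1 z)) = _
  simp only [rankOneSum_apply, _root_.map_sum]
  exact Finset.sum_congr rfl fun i _ => by rw [hP'.map_smulR, hP']

theorem exists_finiteRank_approxUnit {n : ℕ} (e : Fin n → X) {ε : ℝ} (hε : 0 < ε) :
    ∃ g : Fin n → X, (∀ z, ‖∑ j, h.smulR (g j) (h.inner (g j) z)‖ ≤ ‖z‖) ∧
      ∀ i, ‖e i - ∑ j, h.smulR (g j) (h.inner (g j) (e i))‖ ≤ ε := by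
  obtain ⟨p, r, hp, hr, hpr, hK, hR⟩ :=
    exists_conjugate_norm_le_one (h.rankOneSum_nonneg e) (pow_pos hε 2)
  rw [h.conj_rankOneSum e hp] at hK hpr
  rw [h.conj_rankOneSum e hr] at hR
  refine ⟨fun i => p.1 (e i), fun z => ?_, fun i => ?_⟩
  · have := (ContinuousLinearMap.le_opNorm _ z).trans (mul_le_of_le_one_left (norm_nonneg z) hK)
    exact this
  · have h1 : e i - ∑ j, h.smulR (p.1 (e j)) (h.inner (p.1 (e j)) (e i)) =
        r.1 (e i) := by
      rw [← hpr]
      rfl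
    rw [h1]
    refine abs_le_of_sq_le_sq' ?_ hε.le |>.2
    exact h.norm_sq_le_of_rankOne_sum_le (fun i => r.1 (e i)) (sq_nonneg ε)
      (fun z => (ContinuousLinearMap.le_opNorm _ z).trans
        (mul_le_mul_of_nonneg_right hR (norm_nonneg z))) i

end HilbertModule

namespace HilbertModule

variable {B X : Type u} [NonUnitalCStarAlgebra B] [NormedAddCommGroup X] [NormedSpace ℂ X]
  [CompleteSpace X] (h : HilbertModule B X)

variable {h} in
theorem exists_approxUnit_of_isCptOn {T : X → X} (hT : IsCptOn h id T) {ε : ℝ} (hε : 0 < ε) :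
    ∃ (n : ℕ) (g : Fin n → X), (∀ z, ‖(h.rankOneSum g).1 z‖ ≤ ‖z‖) ∧
      ∀ z, ‖T z - (h.rankOneSum g).1 (T z)‖ ≤ ε * ‖z‖ := by
  obtain ⟨n, u, v, huv⟩ := hT (ε / 4) (by positivity)
  simp only [id] at huv
  set D := ∑ i, ‖v i‖ with hD
  have hD0 : 0 ≤ D := Finset.sum_nonneg fun i _ => norm_nonneg _
  obtain ⟨g, hg, hgu⟩ := h.exists_finiteRank_approxUnit u (ε := ε / (2 * (D + 1))) (by positivity)
  refine ⟨n, g, hg, fun z => ?_⟩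
  set K := (h.rankOneSum g).1
  have hK : IsAdjointPair h h K _ := h.isAdjointPair_sum Finset.univ fun i =>
    h.isAdjointPair_rankOne (g i) (g i)
  set w := ∑ i, h.smulR (u i) (h.inner (v i) z) with hw
  have h1 : ‖w - K w‖ ≤ ε / 2 * ‖z‖ := by
    have e1 : w - K w = ∑ i, h.smulR (u i - K (u i)) (h.inner (v i) z) := by
      rw [hw, hK.map_sum, ← Finset.sum_sub_distrib]
      refine Finset.sum_congr rfl fun i _ => ?_
      rw [hK.map_smulR, sub_eq_iff_eq_add, ← h.add_smulR, sub_add_cancel]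
    rw [e1]
    calc _ ≤ ∑ i, ε / (2 * (D + 1)) * (‖v i‖ * ‖z‖) := by
          refine (norm_sum_le _ _).trans (Finset.sum_le_sum fun i _ => ?_)
          refine (h.norm_smulR_le _ _).trans ?_
          gcongr
          · exact hgu i
          · exact h.norm_inner_le _ _
      _ = ε / 2 * (D / (D + 1)) * ‖z‖ := by
          rw [← Finset.mul_sum, ← Finset.sum_mul, ← hD]
          field_simp
      _ ≤ ε / 2 * 1 * ‖z‖ := by
          gcongr
          rw [div_le_one (by positivity)]
          linarith
      _ = _ := by ring
  have h2 : T z - K (T z) = (T z - w) - K (T z - w) + (w - K w) := by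
    rw [hK.map_sub]; abel
  rw [h2]
  have h3 : ‖T z - w‖ ≤ ε / 4 * ‖z‖ := huv z
  have h4 := hg (T z - w)
  calc _ ≤ ‖T z - w‖ + ‖K (T z - w)‖ + ‖w - K w‖ :=
        (norm_add_le _ _).trans (by gcongr; exact norm_sub_le _ _)
    _ ≤ ε / 4 * ‖z‖ + ε / 4 * ‖z‖ + ε / 2 * ‖z‖ := by
        gcongr
        exact h4.trans h3
    _ = _ := by ring

end HilbertModule

namespace BiHilbertModule

variable {A B F : Type u} [NonUnitalCStarAlgebra A] [NonUnitalCStarAlgebra B]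
  [NormedAddCommGroup F] [NormedSpace ℂ F] [CompleteSpace F] (bi : BiHilbertModule A B F)

theorem innerL_actL_right (a : A) (x y : F) :
    bi.innerL x (bi.actL a y) = bi.innerL x y * star a := by
  rw [← bi.star_innerL, bi.innerL_actL_left, star_mul, bi.star_innerL]

theorem innerL_neg_left (x y : F) : bi.innerL (-x) y = -bi.innerL x y :=
  map_neg (AddMonoidHom.mk' (fun w => bi.innerL w y) fun a b => bi.innerL_add_left a b y) x

theorem innerL_neg_right (x y : F) : bi.innerL x (-y) = -bi.innerL x y :=
  map_neg (AddMonoidHom.mk' (bi.innerL x) (bi.innerL_add_right x)) y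

theorem innerL_sub_left (x y z : F) :
    bi.innerL (x - y) z = bi.innerL x z - bi.innerL y z := by
  rw [sub_eq_add_neg, innerL_add_left, innerL_neg_left, sub_eq_add_neg]

theorem innerL_sub_right (x y z : F) :
    bi.innerL x (y - z) = bi.innerL x y - bi.innerL x z := by
  rw [sub_eq_add_neg, innerL_add_right, innerL_neg_right, sub_eq_add_neg]

theorem innerL_sum_left {ι : Type*} (s : Finset ι) (f : ι → F) (y : F) :
    bi.innerL (∑ i ∈ s, f i) y = ∑ i ∈ s, bi.innerL (f i) y :=
  map_sum (AddMonoidHom.mk' (fun w => bi.innerL w y) fun a b => bi.innerL_add_left a b y) f s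

theorem innerL_sum_right {ι : Type*} (s : Finset ι) (x : F) (f : ι → F) :
    bi.innerL x (∑ i ∈ s, f i) = ∑ i ∈ s, bi.innerL x (f i) :=
  map_sum (AddMonoidHom.mk' (bi.innerL x) (bi.innerL_add_right x)) f s

theorem norm_sum_innerL_sq_le {ι : Type*} (s : Finset ι) (x y : ι → F) :
    ‖∑ i ∈ s, bi.innerL (x i) (y i)‖ ^ 2 ≤
      ‖∑ i ∈ s, bi.innerL (x i) (x i)‖ * ‖∑ i ∈ s, bi.innerL (y i) (y i)‖ := by
  refine norm_sq_le_of_forall_isPositiveElem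
    (IsPositiveElem.sum s fun i _ => bi.innerL_pos (y i)) fun a => ?_
  convert IsPositiveElem.sum s fun i _ => bi.innerL_pos (x i - bi.actL a (y i)) using 1
  simp only [innerL_sub_left, innerL_sub_right, innerL_actL_left, innerL_actL_right, star_sum,
    star_innerL, Finset.sum_sub_distrib, Finset.mul_sum, Finset.sum_mul, sub_mul, mul_assoc]
  abel

theorem exists_norm_innerL_le : ∃ c : ℝ, 0 < c ∧ ∀ x y, ‖bi.innerL x y‖ ≤ c * (‖x‖ * ‖y‖) := by
  obtain ⟨c, hc, h⟩ := bi.norm_equiv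
  refine ⟨c, hc, fun x y => abs_le_of_sq_le_sq' ?_ (by positivity) |>.2⟩
  have := bi.norm_sum_innerL_sq_le (Finset.univ : Finset (Fin 1)) (fun _ => x) (fun _ => y)
  simp only [Finset.univ_unique, Finset.sum_const, Finset.card_singleton, one_smul] at this
  calc _ ≤ ‖bi.innerL x x‖ * ‖bi.innerL y y‖ := this
    _ ≤ (c * ‖x‖ ^ 2) * (c * ‖y‖ ^ 2) := by
        rw [bi.right.norm_inner_self, bi.right.norm_inner_self]
        gcongr
        · exact (h x).1
        · exact (h y).1
    _ = _ := by ring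

theorem exists_norm_actL_le (a : A) : ∃ c : ℝ, 0 < c ∧ ∀ x, ‖bi.actL a x‖ ≤ c * ‖x‖ := by
  exact (bi.actL_corr.star_adjoint a).toCLM.bound

/-- The right numerical index is at most `lam`. -/
def HasRightIndexLE (lam : ℝ) : Prop :=
  ∀ (n : ℕ) (f : Fin n → F) (C : ℝ),
    (∀ z : F, ‖∑ i, bi.right.smulR (f i) (bi.right.inner (f i) z)‖ ≤ C * ‖z‖) →
    ‖∑ i, bi.innerL (f i) (f i)‖ ≤ lam * C

/-- `T` is the finite-rank operator `∑ Θ_{uᵢ,vᵢ}` for some vectors with `x = ∑ ₐ⟨uᵢ, vᵢ⟩`. -/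
def IsFiniteRankWith (T : F → F) (x : A) : Prop :=
  ∃ (n : ℕ) (u v : Fin n → F), (∀ z, T z = ∑ i, bi.right.smulR (u i) (bi.right.inner (v i) z)) ∧
    x = ∑ i, bi.innerL (u i) (v i)

variable {bi}

namespace IsFiniteRankWith

variable {T S : F → F} {x y : A}

theorem add (hT : bi.IsFiniteRankWith T x) (hS : bi.IsFiniteRankWith S y) :
    bi.IsFiniteRankWith (fun z => T z + S z) (x + y) := by
  obtain ⟨n, u, v, h, rfl⟩ := hT
  obtain ⟨m, u', v', h', rfl⟩ := hS
  exact ⟨n + m, Fin.append u u', Fin.append v v', fun z => by simp [Fin.sum_univ_add, h, h'],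
    by simp [Fin.sum_univ_add]⟩

theorem neg (hT : bi.IsFiniteRankWith T x) : bi.IsFiniteRankWith (fun z => -T z) (-x) := by
  obtain ⟨n, u, v, h, rfl⟩ := hT
  refine ⟨n, u, fun i => -v i, fun z => ?_, by simp [innerL_neg_right]⟩
  simp only [h, ← Finset.sum_neg_distrib]
  refine Finset.sum_congr rfl fun i _ => ?_
  rw [bi.right.inner_neg_left]
  exact (map_neg (AddMonoidHom.mk' (bi.right.smulR (u i)) (bi.right.smulR_add (u i))) _).symm

theorem sub (hT : bi.IsFiniteRankWith T x) (hS : bi.IsFiniteRankWith S y) :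
    bi.IsFiniteRankWith (fun z => T z - S z) (x - y) := by
  simpa only [sub_eq_add_neg] using hT.add hS.neg

theorem actL_left (hT : bi.IsFiniteRankWith T x) (a : A) :
    bi.IsFiniteRankWith (fun z => bi.actL a (T z)) (a * x) := by
  obtain ⟨n, u, v, h, rfl⟩ := hT
  have ha := bi.actL_corr.star_adjoint a
  refine ⟨n, fun i => bi.actL a (u i), v, fun z => ?_, ?_⟩
  · simp only [h, ha.map_sum, ha.map_smulR]
  · simp only [innerL_actL_left, Finset.mul_sum]

theorem actL_right (hT : bi.IsFiniteRankWith T x) (a : A) :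
    bi.IsFiniteRankWith (fun z => T (bi.actL a z)) (x * a) := by
  obtain ⟨n, u, v, h, rfl⟩ := hT
  have ha := (bi.actL_corr.star_adjoint a).symm
  refine ⟨n, u, fun i => bi.actL (star a) (v i), fun z => ?_, ?_⟩
  · simp only [h, ha _ z]
  · simp only [innerL_actL_right, Finset.sum_mul, star_star]

/-- A finite right numerical index bounds the map `Θ_{e,f} ↦ ₐ⟨e, f⟩` on finite-rank operators. -/
theorem norm_le {lam : ℝ} (hlam : 0 ≤ lam)
    (hnum : bi.HasRightIndexLE lam)
    (hT : bi.IsFiniteRankWith T x) {C : ℝ} (hC : 0 ≤ C) (hb : ∀ z, ‖T z‖ ≤ C * ‖z‖) :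
    ‖x‖ ≤ lam * C := by
  obtain ⟨n, u, v, h, rfl⟩ := hT
  obtain rfl : T = _ := funext h
  obtain ⟨c, hc, hin⟩ := bi.exists_norm_innerL_le
  have hadj : bi.right.IsAdjointPair bi.right
      (fun z => ∑ i, bi.right.smulR (u i) (bi.right.inner (v i) z))
      (fun z => ∑ i, bi.right.smulR (v i) (bi.right.inner (u i) z)) :=
    bi.right.isAdjointPair_sum Finset.univ fun i => bi.right.isAdjointPair_rankOne (u i) (v i)
  set S : F → F := fun z => ∑ i, bi.right.smulR (v i) (bi.right.inner (u i) z) with hS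
  have hSb := hadj.norm_adjoint_le hC hb
  refine le_of_forall_pos_le_add fun ε hε => ?_
  set D := c * ∑ i, ‖v i‖ with hD
  have hD0 : 0 ≤ D := mul_nonneg hc.le (Finset.sum_nonneg fun i _ => norm_nonneg _)
  obtain ⟨g, hg, hgu⟩ :=
    bi.right.exists_finiteRank_approxUnit u (ε := ε / (D + 1)) (by positivity)
  have hswap : ∑ i, bi.innerL (∑ j, bi.right.smulR (g j) (bi.right.inner (g j) (u i))) (v i) =
      ∑ j, bi.innerL (g j) (S (g j)) := by
    simp only [hS, innerL_sum_left, innerL_sum_right]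
    rw [Finset.sum_comm]
    simp only [innerL_smulR, bi.right.star_inner]
  have hmain : ‖∑ j, bi.innerL (g j) (S (g j))‖ ≤ lam * C := by
    refine abs_le_of_sq_le_sq' ?_ (by positivity) |>.2
    have h1 := hnum n g 1 (by simpa using hg)
    have h2 := hnum n (fun j => S (g j)) (C * C) fun z => by
      have e1 : ∑ j, bi.right.smulR (S (g j)) (bi.right.inner (S (g j)) z) =
          S (∑ j, bi.right.smulR (g j)
            (bi.right.inner (g j) (∑ i, bi.right.smulR (u i) (bi.right.inner (v i) z)))) := by
        rw [hadj.symm.map_sum]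
        refine Finset.sum_congr rfl fun j _ => ?_
        rw [hadj.symm.map_smulR, hadj.symm]
      rw [e1, mul_assoc]
      refine (hSb _).trans ?_
      gcongr
      exact (hg _).trans (hb z)
    calc _ ≤ _ := bi.norm_sum_innerL_sq_le Finset.univ g fun j => S (g j)
      _ ≤ (lam * 1) * (lam * (C * C)) := by gcongr
      _ = _ := by ring
  have hdiff : ‖∑ i, bi.innerL (u i) (v i) - ∑ j, bi.innerL (g j) (S (g j))‖ ≤ ε := by
    rw [← hswap, ← Finset.sum_sub_distrib]
    simp only [← innerL_sub_left]
    calc _ ≤ ∑ i, c * (ε / (D + 1) * ‖v i‖) := by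
          refine (norm_sum_le _ _).trans (Finset.sum_le_sum fun i _ => (hin _ _).trans ?_)
          gcongr
          exact hgu i
      _ = ε * (D / (D + 1)) := by
          rw [← Finset.mul_sum, ← Finset.mul_sum, hD]
          ring
      _ ≤ ε * 1 := by
          gcongr
          rw [div_le_one (by positivity)]
          linarith
      _ = ε := mul_one ε
  have := norm_sub_norm_le (∑ i, bi.innerL (u i) (v i)) (∑ j, bi.innerL (g j) (S (g j)))
  linarith

end IsFiniteRankWith

variable (bi) in
/-- `a` is a limit of the values of `Θ_{e,f} ↦ ₐ⟨e, f⟩` on finite-rank operators tending to `T`. -/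
def IsUpsilonValue (T : F → F) (a : A) : Prop :=
  ∀ ε : ℝ, 0 < ε → ∃ (S : F → F) (x : A), bi.IsFiniteRankWith S x ∧
    (∀ z, ‖T z - S z‖ ≤ ε * ‖z‖) ∧ ‖a - x‖ ≤ ε

theorem exists_isFiniteRankWith_of_isCptOn {T : F → F} (hT : IsCptOn bi.right id T) {ε : ℝ}
    (hε : 0 < ε) : ∃ (S : F → F) (x : A), bi.IsFiniteRankWith S x ∧
      ∀ z, ‖T z - S z‖ ≤ ε * ‖z‖ := by
  obtain ⟨n, u, v, h⟩ := hT ε hε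
  exact ⟨_, _, ⟨n, u, v, fun _ => rfl, rfl⟩, h⟩

theorem IsFiniteRankWith.isUpsilonValue {T : F → F} {x : A} (hT : bi.IsFiniteRankWith T x) :
    bi.IsUpsilonValue T x := fun ε hε => ⟨T, x, hT, fun z => by simp; positivity, by simp [hε.le]⟩

namespace IsUpsilonValue

variable {T S : F → F} {a b : A}

theorem add (hT : bi.IsUpsilonValue T a) (hS : bi.IsUpsilonValue S b) :
    bi.IsUpsilonValue (fun z => T z + S z) (a + b) := fun ε hε => by
  obtain ⟨T', x, hT', h1, h2⟩ := hT (ε / 2) (by positivity)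
  obtain ⟨S', y, hS', h3, h4⟩ := hS (ε / 2) (by positivity)
  refine ⟨_, _, hT'.add hS', fun z => ?_, ?_⟩
  · rw [add_sub_add_comm]
    refine (norm_add_le _ _).trans ((add_le_add (h1 z) (h3 z)).trans_eq (by ring))
  · rw [add_sub_add_comm]
    refine (norm_add_le _ _).trans ((add_le_add h2 h4).trans_eq (by ring))

theorem neg (hT : bi.IsUpsilonValue T a) : bi.IsUpsilonValue (fun z => -T z) (-a) :=
  fun ε hε => by
    obtain ⟨T', x, hT', h1, h2⟩ := hT ε hε
    refine ⟨_, _, hT'.neg, fun z => ?_, ?_⟩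
    · rw [← neg_sub', norm_neg]; exact h1 z
    · rw [← neg_sub', norm_neg]; exact h2

theorem sub (hT : bi.IsUpsilonValue T a) (hS : bi.IsUpsilonValue S b) :
    bi.IsUpsilonValue (fun z => T z - S z) (a - b) := by
  simpa only [sub_eq_add_neg] using hT.add hS.neg

theorem actL_left (hT : bi.IsUpsilonValue T a) (c : A) :
    bi.IsUpsilonValue (fun z => bi.actL c (T z)) (c * a) := fun ε hε => by
  obtain ⟨k, hk, hck⟩ := bi.exists_norm_actL_le c
  obtain ⟨T', x, hT', h1, h2⟩ := hT (ε / (k + ‖c‖)) (by positivity)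
  refine ⟨_, _, hT'.actL_left c, fun z => ?_, ?_⟩
  · rw [← (bi.actL_corr.star_adjoint c).map_sub]
    calc _ ≤ k * (ε / (k + ‖c‖) * ‖z‖) := (hck _).trans (by gcongr; exact h1 z)
      _ = k / (k + ‖c‖) * (ε * ‖z‖) := by ring
      _ ≤ 1 * (ε * ‖z‖) := by
          gcongr
          exact (div_le_one (by positivity)).2 (by linarith [norm_nonneg c])
      _ = _ := one_mul _
  · rw [← mul_sub]
    calc _ ≤ ‖c‖ * (ε / (k + ‖c‖)) := (norm_mul_le _ _).trans (by gcongr)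
      _ = ‖c‖ / (k + ‖c‖) * ε := by ring
      _ ≤ 1 * ε := by
          gcongr
          exact (div_le_one (by positivity)).2 (by linarith)
      _ = _ := one_mul _

theorem actL_right (hT : bi.IsUpsilonValue T a) (c : A) :
    bi.IsUpsilonValue (fun z => T (bi.actL c z)) (a * c) := fun ε hε => by
  obtain ⟨k, hk, hck⟩ := bi.exists_norm_actL_le c
  obtain ⟨T', x, hT', h1, h2⟩ := hT (ε / (k + ‖c‖)) (by positivity)
  refine ⟨_, _, hT'.actL_right c, fun z => ?_, ?_⟩
  · calc _ ≤ ε / (k + ‖c‖) * (k * ‖z‖) := (h1 _).trans (by gcongr; exact hck z)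
      _ = k / (k + ‖c‖) * (ε * ‖z‖) := by ring
      _ ≤ 1 * (ε * ‖z‖) := by
          gcongr
          exact (div_le_one (by positivity)).2 (by linarith [norm_nonneg c])
      _ = _ := one_mul _
  · rw [← sub_mul]
    calc _ ≤ (ε / (k + ‖c‖)) * ‖c‖ := (norm_mul_le _ _).trans (by gcongr)
      _ = ‖c‖ / (k + ‖c‖) * ε := by ring
      _ ≤ 1 * ε := by
          gcongr
          exact (div_le_one (by positivity)).2 (by linarith)
      _ = _ := one_mul _

theorem norm_le {lam : ℝ} (hlam : 0 ≤ lam)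
    (hnum : bi.HasRightIndexLE lam) (hT : bi.IsUpsilonValue T a) {C : ℝ} (hC : 0 ≤ C)
    (hb : ∀ z, ‖T z‖ ≤ C * ‖z‖) : ‖a‖ ≤ lam * C := by
  refine le_of_forall_pos_le_add fun ε hε => ?_
  obtain ⟨S, x, hS, h1, h2⟩ := hT (ε / (lam + 1)) (by positivity)
  have h3 := hS.norm_le hlam hnum (C := C + ε / (lam + 1)) (by positivity) fun z => by
    have := norm_sub_norm_le (S z) (T z)
    rw [norm_sub_rev] at this
    linarith [h1 z, hb z]
  have h4 := norm_sub_norm_le a x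
  have h5 : lam * (C + ε / (lam + 1)) + ε / (lam + 1) = lam * C + ε := by field_simp; ring
  linarith

theorem unique {lam : ℝ} (hlam : 0 ≤ lam)
    (hnum : bi.HasRightIndexLE lam) (hT : bi.IsUpsilonValue T a) (hT' : bi.IsUpsilonValue T b) :
    a = b := by
  have := (hT.sub hT').norm_le hlam hnum le_rfl fun z => by simp
  rw [mul_zero, norm_le_zero_iff, sub_eq_zero] at this
  exact this

theorem exists_of_isCptOn {lam : ℝ} (hlam : 0 ≤ lam)
    (hnum : bi.HasRightIndexLE lam) (hT : IsCptOn bi.right id T) : ∃ a, bi.IsUpsilonValue T a := by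
  choose S x hS h using fun n : ℕ =>
    exists_isFiniteRankWith_of_isCptOn hT (Nat.one_div_pos_of_nat (α := ℝ) (n := n))
  have hlim := tendsto_one_div_add_atTop_nhds_zero_nat (𝕜 := ℝ)
  have hx : CauchySeq x := by
    refine cauchySeq_of_le_tendsto_0 (fun N : ℕ => lam * (2 * (1 / ((N : ℝ) + 1))))
      (fun n m N hn hm => ?_) (by simpa using (hlim.const_mul 2).const_mul lam)
    rw [dist_eq_norm]
    refine ((hS n).sub (hS m)).norm_le hlam hnum (by positivity) fun z => ?_
    have h1 : (1 : ℝ) / (n + 1) ≤ 1 / (N + 1) := Nat.one_div_le_one_div hn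
    have h2 : (1 : ℝ) / (m + 1) ≤ 1 / (N + 1) := Nat.one_div_le_one_div hm
    calc ‖S n z - S m z‖ = ‖(T z - S m z) - (T z - S n z)‖ := by congr 1; abel
      _ ≤ 1 / (N + 1) * ‖z‖ + 1 / (N + 1) * ‖z‖ := (norm_sub_le _ _).trans (by
          gcongr
          · exact (h m z).trans (by gcongr)
          · exact (h n z).trans (by gcongr))
      _ = _ := by ring
  obtain ⟨a, ha⟩ := cauchySeq_tendsto_of_complete hx
  refine ⟨a, fun ε hε => ?_⟩
  have e1 := hlim.eventually (gt_mem_nhds hε)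
  have e2 := (Metric.tendsto_nhds.1 ha) ε hε
  obtain ⟨n, hn1, hn2⟩ := (e1.and e2).exists
  refine ⟨S n, x n, hS n, fun z => (h n z).trans (by gcongr), ?_⟩
  rw [← dist_eq_norm, dist_comm]
  exact hn2.le

theorem isPositiveElem {T' : F → F} {lam : ℝ} (hlam : 0 ≤ lam)
    (hnum : bi.HasRightIndexLE lam)
    (hT : IsCptOn bi.right id T) (hadj : bi.right.IsAdjointPair bi.right T T') :
    ∃ a, bi.IsUpsilonValue (fun z => T' (T z)) a ∧ IsPositiveElem a := by
  have happ : ∀ ε : ℝ, 0 < ε → ∃ (n : ℕ) (w : Fin n → F), ∀ z,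
      ‖T' (T z) - ∑ i, bi.right.smulR (w i) (bi.right.inner (w i) z)‖ ≤ ε * ‖z‖ := by
    intro ε hε
    obtain ⟨k, hk, hTk⟩ := hadj.symm.toCLM.bound
    obtain ⟨n, g, -, hg⟩ := HilbertModule.exists_approxUnit_of_isCptOn hT (ε := ε / k)
      (by positivity)
    refine ⟨n, fun j => T' (g j), fun z => ?_⟩
    have e1 : ∑ j, bi.right.smulR (T' (g j)) (bi.right.inner (T' (g j)) z) =
        T' ((bi.right.rankOneSum g).1 (T z)) := by
      rw [HilbertModule.rankOneSum_apply, hadj.symm.map_sum]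
      refine Finset.sum_congr rfl fun j _ => ?_
      rw [hadj.symm.map_smulR, hadj.symm]
    rw [e1, ← hadj.symm.map_sub]
    calc _ ≤ k * (ε / k * ‖z‖) := (hTk _).trans (by gcongr; exact hg z)
      _ = _ := by field_simp
  obtain ⟨a, ha⟩ := exists_of_isCptOn (T := fun z => T' (T z)) hlam hnum fun ε hε => by
    obtain ⟨n, w, hw⟩ := happ ε hε
    exact ⟨n, w, w, hw⟩
  refine ⟨a, ha, ?_⟩
  refine isClosed_isPositiveElem.closure_subset (Metric.mem_closure_iff.2 fun ε hε => ?_)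
  obtain ⟨n, w, hw⟩ := happ (ε / (lam + 1)) (by positivity)
  refine ⟨_, IsPositiveElem.sum Finset.univ fun i _ => bi.innerL_pos (w i), ?_⟩
  have hfr : bi.IsFiniteRankWith (fun z => ∑ i, bi.right.smulR (w i) (bi.right.inner (w i) z))
      (∑ i, bi.innerL (w i) (w i)) := ⟨n, w, w, fun _ => rfl, rfl⟩
  have := (ha.sub hfr.isUpsilonValue).norm_le hlam hnum (by positivity) hw
  rw [dist_eq_norm]
  refine this.trans_lt ?_
  rw [mul_div_assoc', div_lt_iff₀ (by positivity)]
  linarith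

end IsUpsilonValue

end BiHilbertModule

/-- Let `X` be a bi-Hilbertian `A`–`B`-bimodule with finite
right numerical index `λ`, i.e. `‖Σᵢ {}_A⟨fᵢ, fᵢ⟩‖ ≤ λ ‖Σᵢ Θ_{fᵢ,fᵢ}‖` for all
finite families `(fᵢ)`.  Then `Υ(Θ_{e,f}) = {}_A⟨e, f⟩` extends to an
`A`-bilinear positive map `Υ : K(X_B) → A`, and for any compact `T` commuting
with the left `A`-action, `Υ(T)` lies in the centre of `M(A)` (it commutes with
every element of `A`). -/
theorem upsilon_extends {A B F : Type u}
    [NonUnitalCStarAlgebra A] [NonUnitalCStarAlgebra B]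
    [NormedAddCommGroup F] [NormedSpace ℂ F] [CompleteSpace F]
    (bi : BiHilbertModule A B F) (lam : ℝ) (hlam : 0 ≤ lam)
    -- finite right numerical index `λ`
    (hnum : ∀ (n : ℕ) (f : Fin n → F) (C : ℝ),
      (∀ z : F, ‖∑ i, bi.right.smulR (f i) (bi.right.inner (f i) z)‖ ≤ C * ‖z‖) →
      ‖∑ i, bi.innerL (f i) (f i)‖ ≤ lam * C) :
    ∃ Υ : (F → F) → A,
      -- `Υ(Θ_{e,f}) = {}_A⟨e, f⟩`
      (∀ e f : F, Υ (fun z => bi.right.smulR e (bi.right.inner f z)) = bi.innerL e f) ∧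
      -- additive on compact operators
      (∀ T S : F → F, IsCptOn bi.right id T → IsCptOn bi.right id S →
        Υ (fun z => T z + S z) = Υ T + Υ S) ∧
      -- bounded with norm at most `λ`
      (∀ (T : F → F) (C : ℝ), IsCptOn bi.right id T → (∀ z, ‖T z‖ ≤ C * ‖z‖) →
        ‖Υ T‖ ≤ lam * C) ∧
      -- positive
      (∀ T T' : F → F, IsCptOn bi.right id T →
        HilbertModule.IsAdjointPair bi.right bi.right T T' →
        IsPositiveElem (Υ (fun z => T' (T z)))) ∧
      -- `A`-bilinear
      (∀ (a : A) (T : F → F), IsCptOn bi.right id T →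
        Υ (fun z => bi.actL a (T z)) = a * Υ T ∧
        Υ (fun z => T (bi.actL a z)) = Υ T * a) ∧
      -- central values on `A`-commuting compacts
      (∀ T : F → F, IsCptOn bi.right id T →
        (∀ (a : A) (x : F), T (bi.actL a x) = bi.actL a (T x)) →
        ∀ a : A, Υ T * a = a * Υ T) := by
  classical
  let Υ : (F → F) → A := fun T => if h : ∃ a, bi.IsUpsilonValue T a then h.choose else 0
  have hΥ {T : F → F} {a : A} (ha : bi.IsUpsilonValue T a) : Υ T = a := by
    have hex : ∃ a, bi.IsUpsilonValue T a := ⟨a, ha⟩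
    simp only [Υ, dif_pos hex]
    exact hex.choose_spec.unique hlam hnum ha
  have hcpt {T : F → F} (hT : IsCptOn bi.right id T) : bi.IsUpsilonValue T (Υ T) := by
    obtain ⟨a, ha⟩ := BiHilbertModule.IsUpsilonValue.exists_of_isCptOn hlam hnum hT
    rwa [hΥ ha]
  have hbilin (a : A) {T : F → F} (hT : IsCptOn bi.right id T) :
      Υ (fun z => bi.actL a (T z)) = a * Υ T ∧ Υ (fun z => T (bi.actL a z)) = Υ T * a :=
    ⟨hΥ ((hcpt hT).actL_left a), hΥ ((hcpt hT).actL_right a)⟩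
  refine ⟨Υ, fun e f => ?_, fun T S hT hS => hΥ ((hcpt hT).add (hcpt hS)), fun T C hT hb => ?_,
    fun T T' hT hadj => ?_, fun a T hT => hbilin a hT, fun T hT hcomm a => ?_⟩
  · have hfr : bi.IsFiniteRankWith (fun z => bi.right.smulR e (bi.right.inner f z))
        (bi.innerL e f) := ⟨1, fun _ => e, fun _ => f, by simp, by simp⟩
    exact hΥ hfr.isUpsilonValue
  · rcases le_or_gt 0 C with hC | hC
    · exact (hcpt hT).norm_le hlam hnum hC hb
    · have hz (z : F) : ‖z‖ = 0 := by nlinarith [norm_nonneg z, norm_nonneg (T z), hb z]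
      have h0 : 0 ≤ lam * C := by
        simpa using hnum 0 Fin.elim0 C fun z => by simp [hz z]
      have := (hcpt hT).norm_le hlam hnum le_rfl fun z => by simp [hz]
      linarith
  · obtain ⟨a, ha, hpos⟩ := BiHilbertModule.IsUpsilonValue.isPositiveElem hlam hnum hT hadj
    rwa [hΥ ha]
  · rw [← (hbilin a hT).1, ← (hbilin a hT).2]
    simp only [hcomm]
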